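/- Let P be a dcpo and let A, B ∈ P^∨ be such that the pair {A, B} has an upper bound in P^∨. Then A ∪ B is a ⋁-existing Scott closed subset of P, and A ∪ B is the least upper bound of {A, B} in P^∨ (so P^∨ is a dcpo-∨↑-semilattice in which consistent binary joins are given by union). -/

import Mathlib

/-! The union `A ∪ B` of two Scott closed sets is Scott closed because a directed set inside the
union of two lower sets lies entirely inside one of them. If `C` is an upper bound of `A` and `B`
in `P^∨` and `f` is Scott continuous into a dcpo-∨↑-semilattice, then `sup f(A)` and `sup f(B)` are
both below `sup f(C)`, hence have a join, which is the supremum of `f(A ∪ B)`.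

For directed completeness, the supremum of a directed family `D` in `P^∨` is the Scott closure of
its union. The suprema `sup f(A)`, `A ∈ D`, form a directed set, whose supremum `s` is the supremum
of `f` on the union. Passing to the closure creates no new upper-bound conditions, because
`f ⁻¹' Iic s` is Scott closed (`IsScottContinuous.isScottClosed_preimage_Iic`). -/

universe u v

/-- A *dcpo*: a partial order in which every nonempty directed subset has a least upper bound. -/
def IsDcpo (P : Type*) [PartialOrder P] : Prop :=
  ∀ d : Set P, d.Nonempty → DirectedOn (· ≤ ·) d → ∃ a, IsLUB d a

/-- A *dcpo-∨↑-semilattice*: a dcpo in which every consistent pair of elements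
(i.e. pair with an upper bound) has a least upper bound. -/
def IsDcpoVSemilattice (L : Type*) [PartialOrder L] : Prop :=
  IsDcpo L ∧ ∀ x y : L, BddAbove ({x, y} : Set L) → ∃ a, IsLUB ({x, y} : Set L) a

/-- Scott continuity: `f` maps least upper bounds of nonempty directed sets to
least upper bounds of the images. -/
def IsScottContinuous {P : Type*} {L : Type*} [PartialOrder P] [PartialOrder L]
    (f : P → L) : Prop :=
  ∀ d : Set P, d.Nonempty → DirectedOn (· ≤ ·) d → ∀ a, IsLUB d a → IsLUB (f '' d) (f a)

/-- A *Scott closed* set: a lower set closed under least upper bounds of its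
nonempty directed subsets. -/
def IsScottClosed {P : Type*} [PartialOrder P] (A : Set P) : Prop :=
  IsLowerSet A ∧ ∀ d : Set P, d ⊆ A → d.Nonempty → DirectedOn (· ≤ ·) d →
    ∀ a, IsLUB d a → a ∈ A

/-- The Scott closure of a set: the smallest Scott closed set containing it. -/
def scottClosure {P : Type*} [PartialOrder P] (A : Set P) : Set P :=
  ⋂₀ {C | IsScottClosed C ∧ A ⊆ C}

/-- A subset `A` of a dcpo `P` is *⋁-existing* if for every Scott continuous map `f`
into an arbitrary dcpo-∨↑-semilattice `L`, the supremum of `f '' A` exists in `L`. -/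
def SupExisting {P : Type u} [PartialOrder P] (A : Set P) : Prop :=
  ∀ (L : Type v) [PartialOrder L], IsDcpoVSemilattice L →
    ∀ f : P → L, IsScottContinuous f → ∃ a, IsLUB (f '' A) a

/-- An *F-Scott closed* set: a Scott closed set containing the least upper bound of
each of its nonempty finite consistent subsets. -/
def IsFScottClosed {L : Type*} [PartialOrder L] (A : Set L) : Prop :=
  IsScottClosed A ∧ ∀ F : Set L, F ⊆ A → F.Nonempty → F.Finite → BddAbove F →
    ∀ a, IsLUB F a → a ∈ A

/-- The F-Scott closure of a set: the intersection of all F-Scott closed sets containing it. -/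
def fScottClosure {L : Type*} [PartialOrder L] (A : Set L) : Set L :=
  ⋂₀ {C | IsFScottClosed C ∧ A ⊆ C}

/-- A *dcpo-∨↑-semilattice homomorphism*: maps least upper bounds of nonempty directed
sets and of consistent pairs to the least upper bounds of the images. -/
def IsSemilatticeHom {L : Type*} {M : Type*} [PartialOrder L] [PartialOrder M]
    (f : L → M) : Prop :=
  (∀ d : Set L, d.Nonempty → DirectedOn (· ≤ ·) d → ∀ a, IsLUB d a → IsLUB (f '' d) (f a)) ∧
  (∀ x y : L, BddAbove ({x, y} : Set L) → ∀ a, IsLUB ({x, y} : Set L) a →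
    IsLUB (f '' ({x, y} : Set L)) (f a))

/-- A subset `A` of a dcpo-∨↑-semilattice `L` is *F-⋁-existing* if for every
dcpo-∨↑-semilattice homomorphism `f` into an arbitrary dcpo-∨↑-semilattice `M`,
the supremum of `f '' A` exists in `M`. -/
def FSupExisting {L : Type u} [PartialOrder L] (A : Set L) : Prop :=
  ∀ (M : Type v) [PartialOrder M], IsDcpoVSemilattice M →
    ∀ f : L → M, IsSemilatticeHom f → ∃ a, IsLUB (f '' A) a

/-- `P^∨`: the family of all ⋁-existing Scott closed subsets of `P`, ordered by inclusion. -/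
abbrev Pvee (P : Type u) [PartialOrder P] : Type u :=
  {A : Set P // IsScottClosed A ∧ SupExisting.{u, u} A}

theorem isScottClosed_principal {P : Type u} [PartialOrder P] (x : P) :
    IsScottClosed (Set.Iic x) := by
  constructor
  · intro a b hba ha
    exact le_trans hba ha
  · intro d hd _ _ a ha
    exact ha.2 fun y hy => hd hy

theorem supExisting_principal {P : Type u} [PartialOrder P] (x : P) :
    SupExisting.{u, v} (Set.Iic x) := by
  intro L _ _ f hf
  have hdir : DirectedOn (· ≤ ·) (Set.Iic x) := by
    intro a ha b hb
    exact ⟨x, le_refl x, ha, hb⟩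
  exact ⟨f x, hf (Set.Iic x) ⟨x, Set.mem_Iic.2 (le_refl x)⟩ hdir x isLUB_Iic⟩

/-- The embedding `j` of `P` into `P^∨`, sending `x` to the principal ideal `↓x`. -/
def jmap {P : Type u} [PartialOrder P] (x : P) : Pvee P :=
  ⟨Set.Iic x, isScottClosed_principal x, supExisting_principal.{u, u} x⟩

theorem IsScottContinuous.mono {P L : Type*} [PartialOrder P] [PartialOrder L] {f : P → L}
    (hf : IsScottContinuous f) : Monotone f := by
  intro x y hxy
  have hdir : DirectedOn (· ≤ ·) ({x, y} : Set P) := by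
    intro a ha b hb
    refine ⟨y, by simp, ?_, ?_⟩
    · rcases ha with rfl | rfl
      · exact hxy
      · exact le_rfl
    · rcases hb with rfl | rfl
      · exact hxy
      · exact le_rfl
  have hlub : IsLUB ({x, y} : Set P) y :=
    ⟨by rintro z (rfl | rfl); exacts [hxy, le_rfl], fun z hz => hz (by simp)⟩
  exact (hf _ ⟨x, by simp⟩ hdir y hlub).1 ⟨x, by simp, rfl⟩

theorem IsScottContinuous.isScottClosed_preimage_Iic {P L : Type*} [PartialOrder P]
    [PartialOrder L] {f : P → L} (hf : IsScottContinuous f) (s : L) :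
    IsScottClosed (f ⁻¹' Set.Iic s) := by
  refine ⟨fun a b hba ha => (hf.mono hba).trans ha, fun d hd hne hdir a ha => ?_⟩
  refine (hf d hne hdir a ha).2 ?_
  rintro _ ⟨x, hx, rfl⟩
  exact hd hx

theorem IsScottClosed.union {P : Type*} [PartialOrder P] {A B : Set P}
    (hA : IsScottClosed A) (hB : IsScottClosed B) : IsScottClosed (A ∪ B) := by
  refine ⟨hA.1.union hB.1, fun d hd hne hdir a ha => ?_⟩
  by_cases hdA : d ⊆ A
  · exact Or.inl (hA.2 d hdA hne hdir a ha)
  · obtain ⟨x, hx, hxA⟩ := Set.not_subset.1 hdA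
    refine Or.inr (hB.2 d (fun y hy => ?_) hne hdir a ha)
    -- An element of `d` above both `x` and `y` cannot lie in the lower set `A`, so lies in `B`.
    obtain ⟨z, hz, hxz, hyz⟩ := hdir x hx y hy
    exact hB.1 hyz ((hd hz).resolve_left fun h => hxA (hA.1 hxz h))

theorem isScottClosed_scottClosure {P : Type*} [PartialOrder P] (A : Set P) :
    IsScottClosed (scottClosure A) := by
  refine ⟨fun a b hba ha C hC => hC.1.1 hba (ha C hC), fun d hd hne hdir a ha C hC => ?_⟩
  exact hC.1.2 d (fun x hx => hd hx C hC) hne hdir a ha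

theorem subset_scottClosure {P : Type*} [PartialOrder P] (A : Set P) : A ⊆ scottClosure A :=
  fun _ hx _ hC => hC.2 hx

theorem scottClosure_subset {P : Type*} [PartialOrder P] {A C : Set P} (hC : IsScottClosed C)
    (h : A ⊆ C) : scottClosure A ⊆ C :=
  fun _ hx => hx C ⟨hC, h⟩

/-- A Scott continuous map has the same supremum on a set as on its Scott closure. -/
theorem IsScottContinuous.isLUB_image_scottClosure {P L : Type*} [PartialOrder P]
    [PartialOrder L] {f : P → L} (hf : IsScottContinuous f) {U : Set P} {s : L}
    (hs : IsLUB (f '' U) s) : IsLUB (f '' scottClosure U) s := by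
  constructor
  · rintro _ ⟨x, hx, rfl⟩
    exact scottClosure_subset (hf.isScottClosed_preimage_Iic s)
      (fun y hy => hs.1 (Set.mem_image_of_mem f hy)) hx
  · exact fun t ht => hs.2 fun y hy => ht (Set.image_mono (subset_scottClosure U) hy)

theorem SupExisting.union {P : Type u} [PartialOrder P] {A B C : Set P}
    (hA : SupExisting.{u, v} A) (hB : SupExisting.{u, v} B) (hC : SupExisting.{u, v} C)
    (hAC : A ⊆ C) (hBC : B ⊆ C) : SupExisting.{u, v} (A ∪ B) := by
  intro L _ hL f hf
  obtain ⟨a, ha⟩ := hA L hL f hf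
  obtain ⟨b, hb⟩ := hB L hL f hf
  obtain ⟨c, hc⟩ := hC L hL f hf
  have hac : a ≤ c := ha.mono hc (Set.image_mono hAC)
  have hbc : b ≤ c := hb.mono hc (Set.image_mono hBC)
  obtain ⟨s, hs⟩ := hL.2 a b ⟨c, by rintro z (rfl | rfl); exacts [hac, hbc]⟩
  refine ⟨s, ?_⟩
  rw [Set.image_union, isLUB_iff_le_iff]
  intro t
  rw [isLUB_le_iff hs, upperBounds_union, Set.mem_inter_iff, ← isLUB_le_iff ha,
    ← isLUB_le_iff hb]
  simp [upperBounds]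

theorem pvee_join {P : Type u} [PartialOrder P]
    (A B : Pvee P) (hAB : BddAbove ({A, B} : Set (Pvee P))) :
    ∃ S : Pvee P, S.1 = A.1 ∪ B.1 ∧ IsLUB ({A, B} : Set (Pvee P)) S := by
  obtain ⟨C, hC⟩ := hAB
  have hAC : A.1 ⊆ C.1 := hC (Set.mem_insert A {B})
  have hBC : B.1 ⊆ C.1 := hC (Set.mem_insert_of_mem A rfl)
  refine ⟨⟨A.1 ∪ B.1, A.2.1.union B.2.1, A.2.2.union B.2.2 C.2.2 hAC hBC⟩, rfl, ?_, ?_⟩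
  · rintro X (rfl | rfl)
    · exact Set.subset_union_left
    · exact Set.subset_union_right
  · intro T hT
    exact Set.union_subset (hT (Set.mem_insert A {B})) (hT (Set.mem_insert_of_mem A rfl))

theorem supExisting_scottClosure_iUnion {P : Type u} [PartialOrder P] {D : Set (Pvee P)}
    (hne : D.Nonempty) (hdir : DirectedOn (· ≤ ·) D) :
    SupExisting.{u, u} (scottClosure (⋃ A ∈ D, A.1)) := by
  intro L _ hL f hf
  choose σ hσ using fun A : Pvee P => A.2.2 L hL f hf
  have hσmono : Monotone σ := fun A B hAB => (hσ A).mono (hσ B) (Set.image_mono hAB)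
  have hdir' : DirectedOn (· ≤ ·) (σ '' D) := by
    rintro _ ⟨A, hA, rfl⟩ _ ⟨B, hB, rfl⟩
    obtain ⟨C, hC, hAC, hBC⟩ := hdir A hA B hB
    exact ⟨σ C, ⟨C, hC, rfl⟩, hσmono hAC, hσmono hBC⟩
  obtain ⟨s, hs⟩ := hL.1 (σ '' D) (hne.image σ) hdir'
  refine ⟨s, hf.isLUB_image_scottClosure ⟨?_, fun t ht => hs.2 ?_⟩⟩
  · rintro _ ⟨x, hx, rfl⟩
    obtain ⟨A, hA, hxA⟩ := Set.mem_iUnion₂.1 hx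
    exact ((hσ A).1 ⟨x, hxA, rfl⟩).trans (hs.1 ⟨A, hA, rfl⟩)
  · rintro _ ⟨A, hA, rfl⟩
    refine (hσ A).2 ?_
    rintro _ ⟨x, hx, rfl⟩
    exact ht ⟨x, Set.mem_biUnion hA hx, rfl⟩

theorem isDcpo_pvee (P : Type u) [PartialOrder P] : IsDcpo (Pvee P) := by
  intro D hne hdir
  refine ⟨⟨scottClosure (⋃ A ∈ D, A.1), isScottClosed_scottClosure _,
    supExisting_scottClosure_iUnion hne hdir⟩, fun A hA => ?_, fun T hT => ?_⟩
  · exact (Set.subset_biUnion_of_mem (u := fun A : Pvee P => A.1) hA).trans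
      (subset_scottClosure _)
  · exact scottClosure_subset T.2.1 (Set.iUnion₂_subset fun A hA => hT hA)

/-- If `A, B ∈ P^∨` have an upper bound in `P^∨`, then `A ∪ B` is a
⋁-existing Scott closed subset of `P` and is the least upper bound of `{A, B}` in `P^∨`;
consequently `P^∨` is a dcpo-∨↑-semilattice in which consistent binary joins are unions. -/
theorem pvee_consistent_join {P : Type u} [PartialOrder P] (hP : IsDcpo P)
    (A B : Pvee P) (hAB : BddAbove ({A, B} : Set (Pvee P))) :
    (∃ S : Pvee P, S.1 = A.1 ∪ B.1 ∧ IsLUB ({A, B} : Set (Pvee P)) S) ∧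
      IsDcpoVSemilattice (Pvee P) := by
  refine ⟨pvee_join A B hAB, isDcpo_pvee P, fun X Y hXY => ?_⟩
  obtain ⟨S, -, hS⟩ := pvee_join X Y hXY
  exact ⟨S, hS⟩
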